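/- Fix a natural number k, a type α, and pairwise disjoint, finite, nonempty sub-alphabets σ₁, …, σ_k ⊆ α. Let C₁ and C₂ be arc sets on {1, …, k} that are well-nested matchings, and let L(C₁) and L(C₂) be the corresponding block-counting languages over (σ₁, …, σ_k). Then L(C₁) ∩ L(C₂) is context-free if and only if C₁ and C₂ are jointly well-nested. -/

import Mathlib

/-- Two arcs cross: `i < i' < j < j'` or `i' < i < j' < j`. -/
def ArcsCross {k : ℕ} (e₁ e₂ : Fin k × Fin k) : Prop :=
  (e₁.1 < e₂.1 ∧ e₂.1 < e₁.2 ∧ e₁.2 < e₂.2) ∨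
  (e₂.1 < e₁.1 ∧ e₁.1 < e₂.2 ∧ e₂.2 < e₁.2)

/-- An arc set on `{1, …, k}`: every arc `(i, j)` satisfies `i < j`. -/
def IsArcSet {k : ℕ} (C : Set (Fin k × Fin k)) : Prop :=
  ∀ e ∈ C, e.1 < e.2

/-- An arc set is well-nested if no two of its arcs cross. -/
def WellNested {k : ℕ} (C : Set (Fin k × Fin k)) : Prop :=
  ∀ e₁ ∈ C, ∀ e₂ ∈ C, ¬ ArcsCross e₁ e₂

/-- An arc set is a matching if no two distinct arcs share an endpoint. -/
def IsMatching {k : ℕ} (C : Set (Fin k × Fin k)) : Prop :=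
  ∀ e₁ ∈ C, ∀ e₂ ∈ C, e₁ ≠ e₂ →
    ({e₁.1, e₁.2} : Set (Fin k)) ∩ {e₂.1, e₂.2} = ∅

/-- Joint well-nestedness of two arc sets: each is well-nested, no arc of one crosses an arc of
the other, and no two *distinct* arcs (one from each set) share an endpoint. -/
def JointlyWellNested {k : ℕ} (C₁ C₂ : Set (Fin k × Fin k)) : Prop :=
  WellNested C₁ ∧ WellNested C₂ ∧
  (∀ e₁ ∈ C₁, ∀ e₂ ∈ C₂, ¬ ArcsCross e₁ e₂) ∧
  (∀ e₁ ∈ C₁, ∀ e₂ ∈ C₂, e₁ ≠ e₂ →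
    ({e₁.1, e₁.2} : Set (Fin k)) ∩ {e₂.1, e₂.2} = ∅)

/-- The block-counting language over the sub-alphabets `σ 0, …, σ (k-1)` with arc set `C`:
all words that decompose as `B₁B₂⋯B_k` with each block `B_i` over `σ i` and with
`|B_i| = |B_j|` for every arc `(i, j) ∈ C`. -/
def blockLang {α : Type} {k : ℕ} (σ : Fin k → Set α) (C : Set (Fin k × Fin k)) : Language α :=
  { w | ∃ B : Fin k → List α,
      w = (List.ofFn B).flatten ∧
      (∀ i : Fin k, ∀ x ∈ B i, x ∈ σ i) ∧
      (∀ e ∈ C, (B e.1).length = (B e.2).length) }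


namespace BlockCF

/-- `Yield g s w n`: the sentential form `s` derives the terminal word `w` by a forest with `n`
internal nodes. -/
inductive Yield {T : Type} (g : ContextFreeGrammar.{0} T) :
    List (Symbol T g.NT) → List T → ℕ → Prop
  | nil : Yield g [] [] 0
  | term (a : T) {s w n} : Yield g s w n → Yield g (Symbol.terminal a :: s) (a :: w) n
  | nt (r : ContextFreeRule T g.NT) {u s w n m} : r ∈ g.rules → Yield g r.output u n →
      Yield g s w m → Yield g (Symbol.nonterminal r.input :: s) (u ++ w) (n + 1 + m)

variable {T : Type} {g : ContextFreeGrammar.{0} T}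

theorem Yield.append {s t : List (Symbol T g.NT)} {w v : List T} {n m : ℕ}
    (h : Yield g s w n) (h' : Yield g t v m) : Yield g (s ++ t) (w ++ v) (n + m) := by
  induction h with
  | nil => simpa using h'
  | term a _ ih => exact Yield.term a ih
  | nt r hr h1 _ _ ih2 =>
    have := Yield.nt r hr h1 ih2
    simpa [add_assoc] using this

theorem Yield.split {s t : List (Symbol T g.NT)} : ∀ {w : List T} {n : ℕ},
    Yield g (s ++ t) w n → ∃ w1 w2 n1 n2, w = w1 ++ w2 ∧ n = n1 + n2 ∧
      Yield g s w1 n1 ∧ Yield g t w2 n2 := by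
  induction s with
  | nil =>
    intro w n h
    exact ⟨[], w, 0, n, rfl, by simp, Yield.nil, h⟩
  | cons a s ih =>
    intro w n h
    rw [List.cons_append] at h
    cases h with
    | term b h =>
      obtain ⟨w1, w2, n1, n2, rfl, rfl, h1, h2⟩ := ih h
      exact ⟨_, w2, n1, n2, rfl, rfl, Yield.term b h1, h2⟩
    | nt r hr h0 h =>
      obtain ⟨w1, w2, n1, n2, rfl, rfl, h1, h2⟩ := ih h
      exact ⟨_, w2, _, n2, by rw [List.append_assoc], by omega, Yield.nt r hr h0 h1, h2⟩

theorem Yield.rule {r : ContextFreeRule T g.NT} {w : List T} {n : ℕ} (hr : r ∈ g.rules)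
    (h : Yield g r.output w n) : Yield g [Symbol.nonterminal r.input] w (n + 1) := by
  simpa using Yield.nt r hr h Yield.nil

theorem yield_terminals (w : List T) : Yield g (w.map Symbol.terminal) w 0 := by
  induction w with
  | nil => exact Yield.nil
  | cons a w ih => exact Yield.term a ih

theorem yield_of_derives {s : List (Symbol T g.NT)} {w : List T}
    (h : g.Derives s (w.map Symbol.terminal)) : ∃ n, Yield g s w n := by
  induction h using Relation.ReflTransGen.head_induction_on with
  | refl => exact ⟨0, yield_terminals w⟩
  | head h _ ih =>
    obtain ⟨n, hn⟩ := ih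
    obtain ⟨r, hr, h⟩ := h
    obtain ⟨p, q, rfl, rfl⟩ := h.exists_parts
    obtain ⟨w1, w2, n1, n2, rfl, rfl, h1, h2⟩ := hn.split
    obtain ⟨w3, w4, n3, n4, rfl, rfl, h3, h4⟩ := h1.split
    exact ⟨_, (h3.append (h4.rule hr)).append h2⟩

theorem derives_of_yield {s : List (Symbol T g.NT)} {w : List T} {n : ℕ}
    (h : Yield g s w n) : g.Derives s (w.map Symbol.terminal) := by
  induction h with
  | nil => exact ContextFreeGrammar.Derives.refl _
  | term a _ ih => exact ih.append_left [Symbol.terminal a]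
  | nt r hr _ _ ih1 ih2 =>
    rename_i u s w n m _ _
    have h1 : g.Produces [Symbol.nonterminal r.input] r.output :=
      ⟨r, hr, ContextFreeRule.Rewrites.input_output⟩
    have h2 := (h1.trans_derives ih1).append_right s
    have h3 := ih2.append_left (u.map Symbol.terminal)
    rw [List.map_append]
    exact h2.trans h3

theorem mem_language_iff_yield (w : List T) :
    w ∈ g.language ↔ ∃ n, Yield g [Symbol.nonterminal g.initial] w n := by
  rw [ContextFreeGrammar.mem_language_iff]
  exact ⟨yield_of_derives, fun ⟨_, h⟩ => derives_of_yield h⟩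

/-- A context with a hole of type `B` inside a forest with roots `s`. -/
def Ctx (g : ContextFreeGrammar.{0} T) (s : List (Symbol T g.NT)) (B : g.NT) (u z : List T)
    (c : ℕ) : Prop :=
  ∀ x m, Yield g [Symbol.nonterminal B] x m → Yield g s (u ++ x ++ z) (c + m)

theorem find_big (K : ℕ) (hK : 1 ≤ K) {s : List (Symbol T g.NT)} {w : List T} {n : ℕ}
    (h : Yield g s w n) : s.length * K < w.length → ∃ r ∈ g.rules, ∃ u x z c k,
      w = u ++ x ++ z ∧ n = c + k + 1 ∧ Yield g r.output x k ∧ K < x.length ∧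
      Ctx g s r.input u z c := by
  induction h with
  | nil => simp
  | term a _ ih =>
    intro hl
    simp only [List.length_cons, add_mul] at hl
    obtain ⟨r, hr, u, x, z, c, k, rfl, rfl, h1, h2, h3⟩ := ih (by omega)
    exact ⟨r, hr, a :: u, x, z, c, k, rfl, rfl, h1, h2, fun x m hx => Yield.term a (h3 x m hx)⟩
  | nt r hr h1 h2 ih1 ih2 =>
    rename_i u s w n m
    clear ih1
    intro hl
    simp only [List.length_cons, add_mul, List.length_append] at hl
    by_cases hu : K < u.length
    · refine ⟨r, hr, [], u, w, m, n, rfl, by omega, h1, hu, fun x m' hx => ?_⟩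
      have := hx.append h2
      rw [add_comm]
      exact this
    · obtain ⟨r', hr', u', x, z, c, k, rfl, rfl, h1', h2', h3⟩ := ih2 (by omega)
      refine ⟨r', hr', u ++ u', x, z, n + 1 + c, k, by simp, by omega, h1', h2',
        fun x m hx => ?_⟩
      have := Yield.nt r hr h1 (h3 x m hx)
      simpa [add_assoc] using this

/-- A (possibly trivial) pumping-down of a forest, with middle part of length at most `L`. -/
def Pump (g : ContextFreeGrammar.{0} T) (s : List (Symbol T g.NT)) (w : List T) (n L : ℕ) : Prop :=
  ∃ u v x y z n', w = u ++ v ++ x ++ y ++ z ∧ n' < n ∧ Yield g s (u ++ x ++ z) n' ∧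
    (v ++ x ++ y).length ≤ L

theorem Pump.lift {s : List (Symbol T g.NT)} {r : ContextFreeRule T g.NT} (hr : r ∈ g.rules)
    {u x z : List T} {c k L : ℕ} (hc : Ctx g s r.input u z c) (h : Pump g r.output x k L) :
    Pump g s (u ++ x ++ z) (c + k + 1) L := by
  obtain ⟨u', v, x', y, z', n', rfl, hn, hy, hl⟩ := h
  refine ⟨u ++ u', v, x', y, z' ++ z, c + (n' + 1), by simp, by omega, ?_, hl⟩
  simpa using hc _ _ (hy.rule hr)

theorem Pump.mono {s : List (Symbol T g.NT)} {w : List T} {n L L' : ℕ} (h : Pump g s w n L)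
    (hL : L ≤ L') : Pump g s w n L' := by
  obtain ⟨u', v, x', y, z', n', rfl, hn, hy, hl⟩ := h
  exact ⟨u', v, x', y, z', n', rfl, hn, hy, hl.trans hL⟩

open Classical in
theorem pump_or_escape (m : ℕ) (hm1 : 1 ≤ m) (hm : ∀ r ∈ g.rules, r.output.length ≤ m) :
    ∀ (c : ℕ) (F : Finset g.NT), F.card = c → ∀ (s : List (Symbol T g.NT)) (w : List T) (n : ℕ),
      Yield g s w n → s.length * m ^ c < w.length →
      Pump g s w n w.length ∨ ∃ r ∈ g.rules, r.input ∉ F ∧ ∃ u x z c k,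
        w = u ++ x ++ z ∧ n = c + k + 1 ∧ Yield g r.output x k ∧ Ctx g s r.input u z c := by
  intro c
  induction c with
  | zero =>
    intro F hF s w n h hl
    obtain ⟨r, hr, u, x, z, c, k, h1, h2, h3, h4, h5⟩ := find_big 1 le_rfl h (by simpa using hl)
    rw [Finset.card_eq_zero] at hF
    exact Or.inr ⟨r, hr, by simp [hF], u, x, z, c, k, h1, h2, h3, h5⟩
  | succ c ih =>
    intro F hF s w n h hl
    obtain ⟨r, hr, u, x, z, d, k, rfl, rfl, h3, h4, h5⟩ :=
      find_big (m ^ (c + 1)) (Nat.one_le_pow _ _ hm1) h hl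
    by_cases hA : r.input ∈ F
    · have hcard : (F.erase r.input).card = c := by
        rw [Finset.card_erase_of_mem hA, hF]; rfl
      have hl' : r.output.length * m ^ c < x.length := by
        refine lt_of_le_of_lt ?_ h4
        rw [pow_succ, mul_comm]
        exact Nat.mul_le_mul_left _ (hm r hr)
      rcases ih _ hcard _ _ _ h3 hl' with hp | ⟨r', hr', hF', u', x', z', d', k', rfl, rfl, h3', h5'⟩
      · left
        exact (hp.lift hr h5).mono (by simp; omega)
      · by_cases hB : r'.input = r.input
        · left
          refine ⟨u, u', x', z', z, d + (k' + 1), by simp, by omega, ?_, by simp; omega⟩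
          refine h5 _ _ ?_
          rw [← hB]
          exact h3'.rule hr'
        · right
          refine ⟨r', hr', fun hmem => hF' (Finset.mem_erase.2 ⟨hB, hmem⟩), u ++ u', x', z' ++ z,
            d + (d' + 1), k', by simp, by omega, h3', fun x m hx => ?_⟩
          have := h5 _ _ ((h5' x m hx).rule hr)
          convert this using 1
          · simp
          · omega
    · exact Or.inr ⟨r, hr, hA, u, x, z, d, k, rfl, rfl, h3, h5⟩

open Classical in
theorem pump_of_long (g : ContextFreeGrammar.{0} T) : ∃ M m : ℕ, 1 ≤ M ∧
    (∀ r ∈ g.rules, r.output.length ≤ m) ∧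
    ∀ (s : List (Symbol T g.NT)) (w : List T) (n : ℕ),
      Yield g s w n → s.length * M < w.length → Pump g s w n w.length := by
  set m := g.rules.sup (fun r => r.output.length) + 1 with hmdef
  have hm : ∀ r ∈ g.rules, r.output.length ≤ m := fun r hr =>
    (Finset.le_sup (f := fun r : ContextFreeRule T g.NT => r.output.length) hr).trans (Nat.le_succ _)
  refine ⟨m ^ (g.rules.image (fun r => r.input)).card, m, Nat.one_le_pow _ _ (by omega), hm, ?_⟩
  intro s w n h hl
  rcases pump_or_escape m (by omega) hm _ (g.rules.image (fun r => r.input)) rfl s w n h hl with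
    hp | ⟨r, hr, hF, _⟩
  · exact hp
  · exact absurd (Finset.mem_image_of_mem _ hr) hF

theorem pump_local (g : ContextFreeGrammar.{0} T) : ∃ M P : ℕ,
    ∀ (n : ℕ) (s : List (Symbol T g.NT)) (w : List T),
      Yield g s w n → s.length * M < w.length → Pump g s w n P := by
  obtain ⟨M, m, hM, hm, hp⟩ := pump_of_long g
  refine ⟨M, m * M, fun n => ?_⟩
  induction n using Nat.strong_induction_on with
  | _ n ih =>
    intro s w h hl
    obtain ⟨r, hr, u, x, z, d, k, rfl, rfl, h3, h4, h5⟩ := find_big M hM h hl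
    by_cases hx : r.output.length * M < x.length
    · exact (ih k (by omega) _ _ h3 hx).lift hr h5
    · have h6 := hp _ _ _ (h3.rule hr) (by simpa using h4)
      obtain ⟨u', v, x', y, z', n', rfl, hn, hy, hl⟩ := h6
      refine ⟨u ++ u', v, x', y, z' ++ z, d + n', by simp, by omega, ?_, ?_⟩
      · simpa using h5 _ _ hy
      · have := Nat.mul_le_mul_right M (hm r hr)
        omega

/-- The pumping lemma (pumping down only). -/
theorem pumping {L : Language T} (hL : L.IsContextFree) : ∃ P : ℕ, ∀ w ∈ L, P < w.length →
    ∃ u v x y z, w = u ++ v ++ x ++ y ++ z ∧ (v ++ x ++ y).length ≤ P ∧ v ++ y ≠ [] ∧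
      u ++ x ++ z ∈ L := by
  classical
  obtain ⟨g, rfl⟩ := hL
  obtain ⟨M, P, h⟩ := pump_local g
  refine ⟨max M P, fun w hw hl => ?_⟩
  have hex := (mem_language_iff_yield w).1 hw
  obtain ⟨u, v, x, y, z, n', rfl, hn, hy, hle⟩ :=
    h _ _ _ (Nat.find_spec hex) (by simp; omega)
  refine ⟨u, v, x, y, z, rfl, by omega, fun hvy => ?_, (mem_language_iff_yield _).2 ⟨_, hy⟩⟩
  rw [List.append_eq_nil_iff] at hvy
  obtain ⟨rfl, rfl⟩ := hvy
  exact Nat.find_min hex hn (by simpa using hy)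

end BlockCF

namespace BlockCF

section NonCF
variable {α : Type} {k : ℕ} {σ : Fin k → Set α}

open Classical in
/-- Number of letters of `w` in the `i`-th sub-alphabet. -/
noncomputable def cnt (σ : Fin k → Set α) (i : Fin k) (w : List α) : ℕ :=
  w.countP (fun x => decide (x ∈ σ i))

theorem cnt_append (i : Fin k) (u v : List α) : cnt σ i (u ++ v) = cnt σ i u + cnt σ i v := by
  simp [cnt]

theorem cnt_le (i : Fin k) (u : List α) : cnt σ i u ≤ u.length := List.countP_le_length

theorem cnt_pos {i : Fin k} {u : List α} : 0 < cnt σ i u ↔ ∃ x ∈ u, x ∈ σ i := by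
  simp [cnt, List.countP_pos_iff]

theorem cnt_flatten (hdisj : ∀ i j : Fin k, i ≠ j → Disjoint (σ i) (σ j)) (B : Fin k → List α)
    (hB : ∀ i, ∀ x ∈ B i, x ∈ σ i) (i : Fin k) : cnt σ i (List.ofFn B).flatten = (B i).length := by
  have h : ∀ j, cnt σ i (B j) = if j = i then (B i).length else 0 := by
    intro j
    split_ifs with hj
    · subst hj
      simp only [cnt, List.countP_eq_length]
      intro x hx
      simpa using hB _ x hx
    · by_contra hne
      obtain ⟨x, hx, hx'⟩ := cnt_pos.1 (Nat.pos_of_ne_zero hne)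
      exact Set.disjoint_left.1 (hdisj j i hj) (hB j x hx) hx'
  unfold cnt at h ⊢
  rw [List.countP_flatten, List.map_ofFn, List.sum_ofFn]
  simp [h]

theorem pairwise_flatten (hdisj : ∀ i j : Fin k, i ≠ j → Disjoint (σ i) (σ j))
    (B : Fin k → List α) (hB : ∀ i, ∀ x ∈ B i, x ∈ σ i) :
    (List.ofFn B).flatten.Pairwise (fun a b => ∀ p q : Fin k, p < q → a ∈ σ q → b ∉ σ p) := by
  have key : ∀ {x : α} {i j : Fin k}, x ∈ σ i → x ∈ σ j → i = j := by
    intro x i j hi hj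
    by_contra hne
    exact Set.disjoint_left.1 (hdisj i j hne) hi hj
  rw [List.pairwise_flatten]
  constructor
  · intro l hl
    rw [List.mem_ofFn] at hl
    obtain ⟨i, rfl⟩ := hl
    refine List.Pairwise.imp_of_mem (R := fun _ _ => True) ?_ (List.pairwise_of_forall (by simp))
    intro a b ha hb _ p q hpq haq hbp
    have h1 := key haq (hB i a ha)
    have h2 := key hbp (hB i b hb)
    omega
  · rw [List.pairwise_ofFn]
    intro i j hij x hx y hy p q hpq hxq hyp
    have h1 := key hxq (hB i x hx)
    have h2 := key hyp (hB j y hy)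
    omega

/-- One-step relation of the union of two arc sets. -/
def Arc (C₁ C₂ : Set (Fin k × Fin k)) (a b : Fin k) : Prop := (a, b) ∈ C₁ ∨ (a, b) ∈ C₂

theorem not_cf (hdisj : ∀ i j : Fin k, i ≠ j → Disjoint (σ i) (σ j))
    (hne : ∀ i : Fin k, (σ i).Nonempty) (C₁ C₂ : Set (Fin k × Fin k))
    (S : Set (Fin k)) (hS : ∀ a b, Arc C₁ C₂ a b → (a ∈ S ↔ b ∈ S)) (hSne : S.Nonempty)
    (hsep : ∀ l ∈ S, ∃ p q r, p < q ∧ q < r ∧ q ∈ S ∧ Relation.EqvGen (Arc C₁ C₂) l p ∧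
      Relation.EqvGen (Arc C₁ C₂) l r) :
    ¬ (blockLang σ C₁ ⊓ blockLang σ C₂).IsContextFree := by
  classical
  intro hcf
  obtain ⟨P, hP⟩ := pumping hcf
  choose x hx using hne
  set N := P + 1 with hN
  let B : Fin k → List α := fun i => if i ∈ S then List.replicate N (x i) else []
  have hBσ : ∀ i, ∀ y ∈ B i, y ∈ σ i := by
    intro i y hy
    by_cases hi : i ∈ S
    · simp only [B, hi, if_true] at hy
      rw [List.eq_of_mem_replicate hy]
      exact hx i
    · simp [B, hi] at hy
  have hlen : ∀ i, (B i).length = if i ∈ S then N else 0 := by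
    intro i
    by_cases hi : i ∈ S <;> simp [B, hi]
  have harc : ∀ a b, Arc C₁ C₂ a b → (B a).length = (B b).length := by
    intro a b hab
    rw [hlen, hlen]
    simp [hS a b hab]
  have hw1 : (List.ofFn B).flatten ∈ blockLang σ C₁ ⊓ blockLang σ C₂ :=
    ⟨⟨B, rfl, hBσ, fun e he => harc _ _ (Or.inl he)⟩, ⟨B, rfl, hBσ, fun e he => harc _ _ (Or.inr he)⟩⟩
  have hcw := cnt_flatten hdisj B hBσ
  have hpw := pairwise_flatten hdisj B hBσ
  have hmemw : ∀ y ∈ (List.ofFn B).flatten, ∃ i ∈ S, y ∈ σ i := by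
    intro y hy
    simp only [List.mem_flatten, List.mem_ofFn] at hy
    obtain ⟨l, ⟨i, rfl⟩, hl⟩ := hy
    refine ⟨i, ?_, hBσ i y hl⟩
    by_contra hi
    simp [B, hi] at hl
  have hlong : P < ((List.ofFn B).flatten).length := by
    obtain ⟨i, hi⟩ := hSne
    have h1 := hcw i
    have h2 := cnt_le (σ := σ) i (List.ofFn B).flatten
    have h3 := hlen i
    rw [if_pos hi] at h3
    omega
  obtain ⟨u, v, m, y, z, hw, hle, hvy, ⟨hm1, hm2⟩⟩ := hP _ hw1 hlong
  rw [hw] at hcw hpw hmemw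
  have hinv : ∀ a b, Relation.EqvGen (Arc C₁ C₂) a b →
      cnt σ a (u ++ m ++ z) = cnt σ b (u ++ m ++ z) ∧ (a ∈ S ↔ b ∈ S) := by
    intro a b hab
    induction hab with
    | rel a b h =>
      refine ⟨?_, hS a b h⟩
      rcases h with h | h
      · obtain ⟨B', h1, h2, h3⟩ := hm1
        rw [h1, cnt_flatten hdisj B' h2, cnt_flatten hdisj B' h2]
        exact h3 _ h
      · obtain ⟨B', h1, h2, h3⟩ := hm2
        rw [h1, cnt_flatten hdisj B' h2, cnt_flatten hdisj B' h2]
        exact h3 _ h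
    | refl a => exact ⟨rfl, Iff.rfl⟩
    | symm a b _ ih => exact ⟨ih.1.symm, ih.2.symm⟩
    | trans a b c _ _ ih1 ih2 => exact ⟨ih1.1.trans ih2.1, ih1.2.trans ih2.2⟩
  obtain ⟨t, ht⟩ := List.exists_mem_of_ne_nil _ hvy
  obtain ⟨l, hlS, htl⟩ := hmemw t (by
    simp only [List.mem_append] at ht ⊢
    tauto)
  obtain ⟨p, q, r, hpq, hqr, hqS, hlp, hlr⟩ := hsep l hlS
  have hl0 : 0 < cnt σ l (v ++ y) := cnt_pos.2 ⟨t, ht, htl⟩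
  have hpos : ∀ a, Relation.EqvGen (Arc C₁ C₂) l a → ∃ b ∈ v ++ m ++ y, b ∈ σ a := by
    intro a ha
    obtain ⟨h1, h2⟩ := hinv l a ha
    have h3 := hcw l
    have h4 := hcw a
    rw [hlen, if_pos hlS] at h3
    rw [hlen, if_pos (h2.1 hlS)] at h4
    rw [← cnt_pos]
    simp only [cnt_append] at *
    omega
  obtain ⟨bp, hbp, hbpσ⟩ := hpos p hlp
  obtain ⟨br, hbr, hbrσ⟩ := hpos r hlr
  have hq := hcw q
  rw [hlen, if_pos hqS] at hq
  have hassoc : u ++ v ++ m ++ y ++ z = u ++ (v ++ m ++ y) ++ z := by simp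
  rw [hassoc] at hq hpw
  simp only [cnt_append σ q u, cnt_append] at hq
  rw [List.pairwise_append, List.pairwise_append] at hpw
  have hu0 : cnt σ q u = 0 := by
    by_contra h
    obtain ⟨c, hc, hcq⟩ := cnt_pos.1 (Nat.pos_of_ne_zero h)
    exact hpw.1.2.2 c hc bp hbp p q hpq hcq hbpσ
  have hz0 : cnt σ q z = 0 := by
    by_contra h
    obtain ⟨c, hc, hcq⟩ := cnt_pos.1 (Nat.pos_of_ne_zero h)
    exact hpw.2.2 br (List.mem_append_right _ hbr) c hc q r hqr hbrσ hcq
  have := cnt_le (σ := σ) q (v ++ m ++ y)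
  simp only [cnt_append] at this
  omega

theorem jointly_of_cf (hdisj : ∀ i j : Fin k, i ≠ j → Disjoint (σ i) (σ j))
    (hne : ∀ i : Fin k, (σ i).Nonempty) (C₁ C₂ : Set (Fin k × Fin k))
    (hC₁ : IsArcSet C₁) (hC₂ : IsArcSet C₂)
    (hwn₁ : WellNested C₁) (hwn₂ : WellNested C₂)
    (h : (blockLang σ C₁ ⊓ blockLang σ C₂).IsContextFree) : JointlyWellNested C₁ C₂ := by
  -- two classes whose union separates each of them
  have main : ∀ i j : Fin k,
      (∀ l, l = i ∨ l = j → ∃ p q r, p < q ∧ q < r ∧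
        (Relation.EqvGen (Arc C₁ C₂) i q ∨ Relation.EqvGen (Arc C₁ C₂) j q) ∧
        Relation.EqvGen (Arc C₁ C₂) l p ∧ Relation.EqvGen (Arc C₁ C₂) l r) → False := by
    intro i j hij
    refine not_cf hdisj hne C₁ C₂
      {x | Relation.EqvGen (Arc C₁ C₂) i x ∨ Relation.EqvGen (Arc C₁ C₂) j x} ?_
      ⟨i, Or.inl (Relation.EqvGen.refl i)⟩ ?_ h
    · intro a b hab
      have h1 := Relation.EqvGen.rel a b hab
      constructor
      · rintro (h | h)
        · exact Or.inl (h.trans _ _ _ h1)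
        · exact Or.inr (h.trans _ _ _ h1)
      · rintro (h | h)
        · exact Or.inl (h.trans _ _ _ (h1.symm _ _))
        · exact Or.inr (h.trans _ _ _ (h1.symm _ _))
    · rintro l (hl | hl)
      · obtain ⟨p, q, r, h1, h2, h3, h4, h5⟩ := hij i (Or.inl rfl)
        exact ⟨p, q, r, h1, h2, h3, (hl.symm _ _).trans _ _ _ h4, (hl.symm _ _).trans _ _ _ h5⟩
      · obtain ⟨p, q, r, h1, h2, h3, h4, h5⟩ := hij j (Or.inr rfl)
        exact ⟨p, q, r, h1, h2, h3, (hl.symm _ _).trans _ _ _ h4, (hl.symm _ _).trans _ _ _ h5⟩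
  have cross : ∀ i i' j j' : Fin k, i < i' → i' < j → j < j' → Arc C₁ C₂ i j → Arc C₁ C₂ i' j' →
      False := by
    intro i i' j j' h1 h2 h3 ha hb
    apply main i i'
    rintro l (rfl | rfl)
    · exact ⟨l, i', j, h1, h2, Or.inr (.refl _), .refl _, .rel _ _ ha⟩
    · exact ⟨l, j, j', h2, h3, Or.inl (.rel _ _ ha), .refl _, .rel _ _ hb⟩
  have three : ∀ a b c : Fin k, a < b → b < c → Relation.EqvGen (Arc C₁ C₂) a b →
      Relation.EqvGen (Arc C₁ C₂) a c → False := by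
    intro a b c h1 h2 hb hc
    apply main a a
    intro l hl
    obtain rfl : l = a := by simpa using hl
    exact ⟨l, b, c, h1, h2, Or.inl hb, .refl _, hc⟩
  have three' : ∀ a b c : Fin k, a ≠ b → a ≠ c → b ≠ c → Relation.EqvGen (Arc C₁ C₂) a b →
      Relation.EqvGen (Arc C₁ C₂) a c → False := by
    intro a b c h1 h2 h3 hb hc
    have hba := hb.symm _ _
    have hca := hc.symm _ _
    have hbc := hba.trans _ _ _ hc
    have hcb := hca.trans _ _ _ hb
    rcases lt_or_gt_of_ne h1 with h1 | h1 <;> rcases lt_or_gt_of_ne h2 with h2 | h2 <;>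
      rcases lt_or_gt_of_ne h3 with h3 | h3
    · exact three a b c h1 h3 hb hc
    · exact three a c b h2 h3 hc hb
    · omega
    · exact three c a b h2 h1 hca hcb
    · exact three b a c h1 h2 hba hbc
    · omega
    · exact three b c a h3 h2 hbc hba
    · exact three c b a h3 h1 hcb hca
  refine ⟨hwn₁, hwn₂, ?_, ?_⟩
  · rintro ⟨i, j⟩ h1 ⟨i', j'⟩ h2 (⟨ha, hb, hc⟩ | ⟨ha, hb, hc⟩)
    · exact cross _ _ _ _ ha hb hc (Or.inl h1) (Or.inr h2)
    · exact cross _ _ _ _ ha hb hc (Or.inr h2) (Or.inl h1)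
  · rintro ⟨i, j⟩ h1 ⟨i', j'⟩ h2 hne'
    have hlt1 : i < j := hC₁ _ h1
    have hlt2 : i' < j' := hC₂ _ h2
    have e1 : Relation.EqvGen (Arc C₁ C₂) i j := .rel _ _ (Or.inl h1)
    have e2 : Relation.EqvGen (Arc C₁ C₂) i' j' := .rel _ _ (Or.inr h2)
    rw [Set.eq_empty_iff_forall_notMem]
    rintro x ⟨hx1, hx2⟩
    simp only [Set.mem_insert_iff, Set.mem_singleton_iff] at hx1 hx2
    rcases hx1 with rfl | rfl <;> rcases hx2 with rfl | rfl
    · refine three' x j j' hlt1.ne hlt2.ne ?_ e1 e2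
      rintro rfl; exact hne' rfl
    · exact three' x j i' hlt1.ne hlt2.ne' (hlt2.trans hlt1).ne' e1 (e2.symm _ _)
    · exact three' x i j' hlt1.ne' hlt2.ne (hlt1.trans hlt2).ne (e1.symm _ _) e2
    · refine three' x i i' hlt1.ne' hlt2.ne' ?_ (e1.symm _ _) (e2.symm _ _)
      rintro rfl; exact hne' rfl

end NonCF
end BlockCF

namespace BlockCF

section CF
variable {α : Type}

/-- Semantics of a sentential form, given a language for each nonterminal. -/
def Sem {N : Type} (L : N → Set (List α)) : List (Symbol α N) → Set (List α)
  | [] => {[]}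
  | Symbol.terminal a :: s => {w | ∃ v ∈ Sem L s, w = a :: v}
  | Symbol.nonterminal X :: s => {w | ∃ u ∈ L X, ∃ v ∈ Sem L s, w = u ++ v}

theorem Yield.sound {g : ContextFreeGrammar.{0} α} (L : g.NT → Set (List α))
    (hL : ∀ r ∈ g.rules, Sem L r.output ⊆ L r.input) {s : List (Symbol α g.NT)} {w : List α}
    {n : ℕ} (h : Yield g s w n) : w ∈ Sem L s := by
  induction h with
  | nil => simp [Sem]
  | term a _ ih => exact ⟨_, ih, rfl⟩
  | nt r hr _ _ ih1 ih2 => exact ⟨_, hL r hr ih1, _, ih2, rfl⟩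

/-- Concatenation of the blocks with index in `[a, b)`. -/
def cat (B : ℕ → List α) (a b : ℕ) : List α := ((List.Ico a b).map B).flatten

theorem cat_nil (B : ℕ → List α) {a b : ℕ} (h : b ≤ a) : cat B a b = [] := by
  simp [cat, List.Ico.eq_nil_of_le h]

theorem cat_cons (B : ℕ → List α) {a b : ℕ} (h : a < b) : cat B a b = B a ++ cat B (a + 1) b := by
  simp [cat, List.Ico.eq_cons h]

theorem cat_append (B : ℕ → List α) {a b c : ℕ} (h : a ≤ b) (h' : b ≤ c) :
    cat B a c = cat B a b ++ cat B b c := by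
  simp [cat, ← List.Ico.append_consecutive h h']

theorem cat_congr {B B' : ℕ → List α} {a b : ℕ} (h : ∀ i, a ≤ i → i < b → B i = B' i) :
    cat B a b = cat B' a b := by
  unfold cat
  congr 1
  apply List.map_congr_left
  intro i hi
  rw [List.Ico.mem] at hi
  exact h i hi.1 hi.2

theorem cat_arc (B : ℕ → List α) {a b c : ℕ} (h : a < c) (h' : c < b) :
    cat B a b = B a ++ cat B (a + 1) c ++ B c ++ cat B (c + 1) b := by
  rw [cat_cons B (h.trans h'), cat_append B (show a + 1 ≤ c by omega) h'.le, cat_cons B h']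
  simp

/-- Language of the interval `[a, b)`. -/
def LI (σ : ℕ → Set α) (C : ℕ → ℕ → Prop) (a b : ℕ) : Set (List α) :=
  {w | ∃ B : ℕ → List α, w = cat B a b ∧ (∀ i, a ≤ i → i < b → ∀ x ∈ B i, x ∈ σ i) ∧
    ∀ i j, C i j → a ≤ i → j < b → (B i).length = (B j).length}

/-- Language of an arc `(a, c)` with everything below it. -/
def LM (σ : ℕ → Set α) (C : ℕ → ℕ → Prop) (a c : ℕ) : Set (List α) :=
  {w | ∃ u x t, w = u ++ x ++ t ∧ (∀ y ∈ u, y ∈ σ a) ∧ (∀ y ∈ t, y ∈ σ c) ∧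
    u.length = t.length ∧ x ∈ LI σ C (a + 1) c}

/-- Nonterminals of the grammar. -/
inductive NTs : Type
  | I (a b : ℕ) : NTs
  | M (a b : ℕ) : NTs

/-- Language of a nonterminal. -/
def LN (σ : ℕ → Set α) (C : ℕ → ℕ → Prop) : NTs → Set (List α)
  | NTs.I a b => LI σ C a b
  | NTs.M a b => LM σ C a b

/-- Rules of the grammar. -/
inductive IsRule (σ : ℕ → Set α) (C : ℕ → ℕ → Prop) (k : ℕ) : ContextFreeRule α NTs → Prop
  | eps (a b : ℕ) : b ≤ a → a ≤ k → IsRule σ C k ⟨NTs.I a b, []⟩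
  | letter (a b : ℕ) (s : α) : a < b → b ≤ k → (∀ c, c < b → ¬ C a c) → s ∈ σ a →
      IsRule σ C k ⟨NTs.I a b, [Symbol.terminal s, Symbol.nonterminal (NTs.I a b)]⟩
  | skip (a b : ℕ) : a < b → b ≤ k → (∀ c, c < b → ¬ C a c) →
      IsRule σ C k ⟨NTs.I a b, [Symbol.nonterminal (NTs.I (a + 1) b)]⟩
  | arc (a b c : ℕ) : a < c → c < b → b ≤ k → C a c →
      IsRule σ C k ⟨NTs.I a b,
        [Symbol.nonterminal (NTs.M a c), Symbol.nonterminal (NTs.I (c + 1) b)]⟩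
  | pair (a c : ℕ) (s t : α) : a < c → c < k → s ∈ σ a → t ∈ σ c →
      IsRule σ C k ⟨NTs.M a c,
        [Symbol.terminal s, Symbol.nonterminal (NTs.M a c), Symbol.terminal t]⟩
  | inner (a c : ℕ) : a < c → c < k →
      IsRule σ C k ⟨NTs.M a c, [Symbol.nonterminal (NTs.I (a + 1) c)]⟩

theorem rules_finite (σ : ℕ → Set α) (C : ℕ → ℕ → Prop) (k : ℕ) (hσ : ∀ i, (σ i).Finite) :
    {r | IsRule σ C k r}.Finite := by
  have hA : (⋃ i ∈ Set.Iic k, σ i).Finite := (Set.finite_Iic k).biUnion (fun i _ => hσ i)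
  have hK : (Set.Iic k).Finite := Set.finite_Iic k
  set A := ⋃ i ∈ Set.Iic k, σ i with hAdef
  have hmem : ∀ i s, i ≤ k → s ∈ σ i → s ∈ A := fun i s hi hs => Set.mem_biUnion hi hs
  have hKK := hK.prod hK
  have f1 := hKK.image (fun p : ℕ × ℕ => (⟨NTs.I p.1 p.2, []⟩ : ContextFreeRule α NTs))
  have f2 := (hKK.prod hA).image (fun p : (ℕ × ℕ) × α => (⟨NTs.I p.1.1 p.1.2,
    [Symbol.terminal p.2, Symbol.nonterminal (NTs.I p.1.1 p.1.2)]⟩ : ContextFreeRule α NTs))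
  have f3 := hKK.image (fun p : ℕ × ℕ =>
    (⟨NTs.I p.1 p.2, [Symbol.nonterminal (NTs.I (p.1 + 1) p.2)]⟩ : ContextFreeRule α NTs))
  have f4 := (hKK.prod hK).image (fun p : (ℕ × ℕ) × ℕ => (⟨NTs.I p.1.1 p.1.2,
    [Symbol.nonterminal (NTs.M p.1.1 p.2), Symbol.nonterminal (NTs.I (p.2 + 1) p.1.2)]⟩ :
      ContextFreeRule α NTs))
  have f5 := (hKK.prod (hA.prod hA)).image (fun p : (ℕ × ℕ) × α × α => (⟨NTs.M p.1.1 p.1.2,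
    [Symbol.terminal p.2.1, Symbol.nonterminal (NTs.M p.1.1 p.1.2), Symbol.terminal p.2.2]⟩ :
      ContextFreeRule α NTs))
  have f6 := hKK.image (fun p : ℕ × ℕ =>
    (⟨NTs.M p.1 p.2, [Symbol.nonterminal (NTs.I (p.1 + 1) p.2)]⟩ : ContextFreeRule α NTs))
  refine (f1.union (f2.union (f3.union (f4.union (f5.union f6))))).subset ?_
  intro r hr
  cases hr with
  | eps a b h1 h2 => exact Or.inl ⟨(a, b), ⟨h2, h1.trans h2⟩, rfl⟩
  | letter a b s h1 h2 h3 h4 =>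
    have h5 : a ≤ k := by omega
    exact Or.inr (Or.inl ⟨((a, b), s), ⟨⟨h5, h2⟩, hmem a s h5 h4⟩, rfl⟩)
  | skip a b h1 h2 h3 =>
    have h5 : a ≤ k := by omega
    exact Or.inr (Or.inr (Or.inl ⟨(a, b), ⟨h5, h2⟩, rfl⟩))
  | arc a b c h1 h2 h3 h4 =>
    have h5 : a ≤ k := by omega
    have h6 : c ≤ k := by omega
    exact Or.inr (Or.inr (Or.inr (Or.inl ⟨((a, b), c), ⟨⟨h5, h3⟩, h6⟩, rfl⟩)))
  | pair a c s t h1 h2 h3 h4 =>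
    have h5 : a ≤ k := by omega
    have h6 : c ≤ k := by omega
    exact Or.inr (Or.inr (Or.inr (Or.inr (Or.inl
      ⟨((a, c), s, t), ⟨⟨h5, h6⟩, hmem a s h5 h3, hmem c t h6 h4⟩, rfl⟩))))
  | inner a c h1 h2 =>
    have h5 : a ≤ k := by omega
    have h6 : c ≤ k := by omega
    exact Or.inr (Or.inr (Or.inr (Or.inr (Or.inr ⟨(a, c), ⟨h5, h6⟩, rfl⟩))))

/-- The grammar. -/
noncomputable def gram (σ : ℕ → Set α) (C : ℕ → ℕ → Prop) (k : ℕ) (hσ : ∀ i, (σ i).Finite) :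
    ContextFreeGrammar.{0} α where
  NT := NTs
  initial := NTs.I 0 k
  rules := (rules_finite σ C k hσ).toFinset

theorem mem_gram (σ : ℕ → Set α) (C : ℕ → ℕ → Prop) (k : ℕ) (hσ : ∀ i, (σ i).Finite)
    (r : ContextFreeRule α NTs) : r ∈ (gram σ C k hσ).rules ↔ IsRule σ C k r :=
  Set.Finite.mem_toFinset _

theorem rule_sound (σ : ℕ → Set α) (C : ℕ → ℕ → Prop) (k : ℕ)
    (hlt : ∀ i j, C i j → i < j)
    (hnc : ∀ i j i' j', C i j → C i' j' → i < i' → i' < j → j < j' → False)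
    (hm : ∀ i j i' j', C i j → C i' j' → (i = i' ∨ i = j' ∨ j = i' ∨ j = j') → i = i' ∧ j = j')
    (r : ContextFreeRule α NTs) (hr : IsRule σ C k r) : Sem (LN σ C) r.output ⊆ LN σ C r.input := by
  cases hr with
  | eps a b h1 h2 =>
    rintro w rfl
    refine ⟨fun _ => [], (cat_nil _ h1).symm, by simp, by simp⟩
  | letter a b s h1 h2 h3 h4 =>
    rintro w ⟨v, ⟨u, ⟨B, rfl, hB1, hB2⟩, v', rfl, rfl⟩, rfl⟩
    refine ⟨fun i => if i = a then s :: B a else B i, ?_, ?_, ?_⟩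
    · rw [cat_cons _ h1, cat_cons _ h1, cat_congr (B := fun i => if i = a then s :: B a else B i)
        (B' := B) (a := a + 1)]
      · simp
      · intro i hi _
        simp [show i ≠ a by omega]
    · intro i hi hi' x hx
      by_cases hia : i = a
      · subst hia
        simp only [if_true, List.mem_cons] at hx
        rcases hx with rfl | hx
        · exact h4
        · exact hB1 _ le_rfl h1 _ hx
      · simp only [hia, if_false] at hx
        exact hB1 _ hi hi' _ hx
    · intro i j hC hi hj
      have := hlt _ _ hC
      have hia : i ≠ a := by
        rintro rfl
        exact h3 _ hj hC
      simp only [hia, if_false, show j ≠ a by omega]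
      exact hB2 i j hC hi hj
  | skip a b h1 h2 h3 =>
    rintro w ⟨u, ⟨B, rfl, hB1, hB2⟩, v', rfl, rfl⟩
    refine ⟨fun i => if i = a then [] else B i, ?_, ?_, ?_⟩
    · rw [cat_cons _ h1, cat_congr (B := fun i => if i = a then [] else B i)
        (B' := B) (a := a + 1)]
      · simp
      · intro i hi _
        simp [show i ≠ a by omega]
    · intro i hi hi' x hx
      by_cases hia : i = a
      · simp [hia] at hx
      · simp only [hia, if_false] at hx
        exact hB1 _ (by omega) hi' _ hx
    · intro i j hC hi hj
      have := hlt _ _ hC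
      have hia : i ≠ a := by
        rintro rfl
        exact h3 _ hj hC
      simp only [hia, if_false, show j ≠ a by omega]
      exact hB2 i j hC (by omega) hj
  | arc a b c h1 h2 h3 h4 =>
    rintro w ⟨_, ⟨u, _, t, rfl, hu, ht, hut, ⟨B1, rfl, hB1, hB1'⟩⟩, _,
      ⟨_, ⟨B2, rfl, hB2, hB2'⟩, _, rfl, rfl⟩, rfl⟩
    let B : ℕ → List α := fun i => if i = a then u else if i < c then B1 i else
      if i = c then t else B2 i
    have e1 : B a = u := by simp [B]
    have e2 : ∀ i, a + 1 ≤ i → i < c → B i = B1 i := by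
      intro i hi hi'
      simp [B, show i ≠ a by omega, hi']
    have e3 : B c = t := by simp [B, h1.ne']
    have e4 : ∀ i, c + 1 ≤ i → B i = B2 i := by
      intro i hi
      simp [B, show i ≠ a by omega, show ¬ i < c by omega, show i ≠ c by omega]
    refine ⟨B, ?_, ?_, ?_⟩
    · rw [cat_arc B h1 h2, e1, e3, cat_congr e2, cat_congr (fun i hi _ => e4 i hi)]
      simp
    · intro i hi hi' x hx
      rcases Nat.lt_trichotomy i c with hic | rfl | hic
      · by_cases hia : i = a
        · subst hia
          rw [e1] at hx
          exact hu x hx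
        · rw [e2 i (by omega) hic] at hx
          exact hB1 i (by omega) hic x hx
      · rw [e3] at hx
        exact ht x hx
      · rw [e4 i hic] at hx
        exact hB2 i hic hi' x hx
    · intro i j hC hi hj
      have hij := hlt _ _ hC
      by_cases hsame : i = a ∨ i = c ∨ j = a ∨ j = c
      · obtain ⟨rfl, rfl⟩ := hm i j a c hC h4 (by tauto)
        rw [e1, e3, hut]
      · push Not at hsame
        obtain ⟨n1, n2, n3, n4⟩ := hsame
        rcases Nat.lt_or_ge c i with hci | hci
        · rw [e4 i hci, e4 j (by omega)]
          exact hB2' i j hC hci hj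
        · have : j < c := by
            by_contra hjc
            exact hnc a c i j h4 hC (by omega) (by omega) (by omega)
          rw [e2 i (by omega) (by omega), e2 j (by omega) this]
          exact hB1' i j hC (by omega) this
  | pair a c s t h1 h2 h3 h4 =>
    rintro w ⟨_, ⟨_, ⟨u, x, t', rfl, hu, ht, hut, hx⟩, _, ⟨_, rfl, rfl⟩, rfl⟩, rfl⟩
    refine ⟨s :: u, x, t' ++ [t], by simp, ?_, ?_, by simp [hut], hx⟩
    · intro y hy
      rcases List.mem_cons.1 hy with rfl | hy
      · exact h3
      · exact hu y hy
    · intro y hy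
      rcases List.mem_append.1 hy with hy | hy
      · exact ht y hy
      · rw [List.mem_singleton.1 hy]
        exact h4
  | inner a c h1 h2 =>
    rintro w ⟨x, hx, _, rfl, rfl⟩
    exact ⟨[], x, [], by simp, by simp, by simp, rfl, hx⟩

section complete
variable (σ : ℕ → Set α) (C : ℕ → ℕ → Prop) (k : ℕ) (hσ : ∀ i, (σ i).Finite)

/-- Derivability of a terminal word from a sentential form. -/
def Yd (s : List (Symbol α NTs)) (w : List α) : Prop := ∃ n, Yield (gram σ C k hσ) s w n

variable {σ C k hσ}

theorem Yd.append {s t : List (Symbol α NTs)} {w v : List α} (h : Yd σ C k hσ s w)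
    (h' : Yd σ C k hσ t v) : Yd σ C k hσ (s ++ t) (w ++ v) := by
  obtain ⟨n, h⟩ := h
  obtain ⟨m, h'⟩ := h'
  exact ⟨_, Yield.append h h'⟩

theorem Yd.term {s : List (Symbol α NTs)} {w : List α} (a : α) (h : Yd σ C k hσ s w) :
    Yd σ C k hσ (Symbol.terminal a :: s) (a :: w) := by
  obtain ⟨n, h⟩ := h
  exact ⟨_, Yield.term a h⟩

theorem Yd.nil : Yd σ C k hσ [] [] := ⟨_, Yield.nil⟩

theorem Yd.rule {X : NTs} {s : List (Symbol α NTs)} {w : List α} (hr : IsRule σ C k ⟨X, s⟩)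
    (h : Yd σ C k hσ s w) : Yd σ C k hσ [Symbol.nonterminal X] w := by
  obtain ⟨n, h⟩ := h
  exact ⟨_, Yield.rule (g := gram σ C k hσ) (r := ⟨X, s⟩) ((mem_gram σ C k hσ _).2 hr) h⟩

theorem Yd.letters {a b : ℕ} (hab : a < b) (hb : b ≤ k) (hC : ∀ c, c < b → ¬ C a c)
    {w : List α} (h : Yd σ C k hσ [Symbol.nonterminal (NTs.I (a + 1) b)] w) (u : List α)
    (hu : ∀ y ∈ u, y ∈ σ a) : Yd σ C k hσ [Symbol.nonterminal (NTs.I a b)] (u ++ w) := by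
  induction u with
  | nil => exact Yd.rule (.skip a b hab hb hC) h
  | cons y u ih =>
    refine Yd.rule (.letter a b y hab hb hC (hu y (by simp))) ?_
    exact Yd.term y (ih fun z hz => hu z (List.mem_cons_of_mem _ hz))

theorem Yd.pairs {a c : ℕ} (hac : a < c) (hc : c < k)
    {w : List α} (h : Yd σ C k hσ [Symbol.nonterminal (NTs.I (a + 1) c)] w) (u : List α)
    (hu : ∀ y ∈ u, y ∈ σ a) : ∀ (t : List α) (_ : ∀ y ∈ t, y ∈ σ c) (_ : u.length = t.length),
    Yd σ C k hσ [Symbol.nonterminal (NTs.M a c)] (u ++ w ++ t) := by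
  induction u with
  | nil =>
    intro t _ hl
    obtain rfl : t = [] := List.length_eq_zero_iff.1 hl.symm
    simpa using Yd.rule (.inner a c hac hc) h
  | cons y u ih =>
    intro t ht hl
    rcases List.eq_nil_or_concat t with rfl | ⟨t, z, rfl⟩
    · simp at hl
    · have h1 := ih (fun z hz => hu z (List.mem_cons_of_mem _ hz)) t
        (fun z hz => ht z (by simp [hz])) (by simpa using hl)
      have h2 := Yd.term y (h1.append (Yd.term z Yd.nil))
      have h3 := Yd.rule (.pair a c y z hac hc (hu y (by simp)) (ht z (by simp))) h2
      simpa using h3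

theorem Yd.complete (hlt : ∀ i j, C i j → i < j) : ∀ (d a b : ℕ), b - a ≤ d → a ≤ k → b ≤ k →
    ∀ w ∈ LI σ C a b, Yd σ C k hσ [Symbol.nonterminal (NTs.I a b)] w := by
  intro d
  induction d with
  | zero =>
    rintro a b hd ha hb w ⟨B, rfl, -, -⟩
    rw [cat_nil B (by omega)]
    exact Yd.rule (.eps a b (by omega) ha) Yd.nil
  | succ d ih =>
    rintro a b hd ha hb w ⟨B, rfl, hB1, hB2⟩
    rcases Nat.lt_or_ge a b with hab | hab
    · by_cases hC : ∃ c, c < b ∧ C a c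
      · obtain ⟨c, hcb, hC⟩ := hC
        have hac := hlt _ _ hC
        rw [cat_arc B hac hcb]
        have h1 := ih (a + 1) c (by omega) (by omega) (by omega) (cat B (a + 1) c)
          ⟨B, rfl, fun i hi hi' => hB1 i (by omega) (by omega),
            fun i j h hi hj => hB2 i j h (by omega) (by omega)⟩
        have h2 := ih (c + 1) b (by omega) (by omega) (by omega) (cat B (c + 1) b)
          ⟨B, rfl, fun i hi hi' => hB1 i (by omega) (by omega),
            fun i j h hi hj => hB2 i j h (by omega) (by omega)⟩
        exact Yd.rule (.arc a b c hac hcb hb hC) ((Yd.pairs hac (by omega) h1 (B a)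
          (hB1 a le_rfl hab) (B c) (hB1 c hac.le hcb) (hB2 a c hC le_rfl hcb)).append h2)
      · push Not at hC
        rw [cat_cons B hab]
        refine Yd.letters hab hb hC ?_ (B a) (hB1 a le_rfl hab)
        exact ih (a + 1) b (by omega) (by omega) (by omega) (cat B (a + 1) b)
          ⟨B, rfl, fun i hi hi' => hB1 i (by omega) (by omega),
            fun i j h hi hj => hB2 i j h (by omega) (by omega)⟩
    · rw [cat_nil B hab]
      exact Yd.rule (.eps a b hab ha) Yd.nil

end complete

theorem LI_cf (σ : ℕ → Set α) (C : ℕ → ℕ → Prop) (k : ℕ) (hσ : ∀ i, (σ i).Finite)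
    (hlt : ∀ i j, C i j → i < j)
    (hnc : ∀ i j i' j', C i j → C i' j' → i < i' → i' < j → j < j' → False)
    (hm : ∀ i j i' j', C i j → C i' j' → (i = i' ∨ i = j' ∨ j = i' ∨ j = j') → i = i' ∧ j = j') :
    Language.IsContextFree (T := α) (LI σ C 0 k) := by
  refine ⟨gram σ C k hσ, ?_⟩
  ext w
  rw [mem_language_iff_yield]
  constructor
  · rintro ⟨n, hn⟩
    obtain ⟨u, hu, v, rfl, rfl⟩ := Yield.sound (g := gram σ C k hσ) (LN σ C)
      (fun r hr => rule_sound σ C k hlt hnc hm r ((mem_gram σ C k hσ r).1 hr)) hn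
    rw [List.append_nil]
    exact hu
  · intro hw
    exact Yd.complete hlt k 0 k (by omega) (by omega) le_rfl w hw

theorem cf_of_jointly {k : ℕ} {σ : Fin k → Set α}
    (hdisj : ∀ i j : Fin k, i ≠ j → Disjoint (σ i) (σ j))
    (hfin : ∀ i : Fin k, (σ i).Finite) (C₁ C₂ : Set (Fin k × Fin k))
    (hC₁ : IsArcSet C₁) (hC₂ : IsArcSet C₂)
    (hm₁ : IsMatching C₁) (hm₂ : IsMatching C₂) (h : JointlyWellNested C₁ C₂) :
    (blockLang σ C₁ ⊓ blockLang σ C₂).IsContextFree := by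
  classical
  obtain ⟨hwn₁, hwn₂, hx, hsh⟩ := h
  let σ' : ℕ → Set α := fun i => if h : i < k then σ ⟨i, h⟩ else ∅
  let C : ℕ → ℕ → Prop := fun a b => ∃ x y : Fin k, x.1 = a ∧ y.1 = b ∧ Arc C₁ C₂ x y
  have hσ' : ∀ i : Fin k, σ' i = σ i := fun i => by simp [σ']
  have heq : blockLang σ C₁ ⊓ blockLang σ C₂ = LI σ' C 0 k := by
    ext w
    constructor
    · rintro ⟨⟨B, rfl, hB, hB1⟩, ⟨B', hw, hB', hB2⟩⟩
      have hlen : ∀ i, (B' i).length = (B i).length := fun i => by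
        rw [← cnt_flatten hdisj B hB i, hw, cnt_flatten hdisj B' hB' i]
      refine ⟨fun i => if h : i < k then B ⟨i, h⟩ else [], ?_, ?_, ?_⟩
      · unfold cat
        congr 1
        rw [List.Ico.zero_bot]
        apply List.ext_getElem
        · simp
        · intro i h1 h2
          simp at h1
          simp [h1]
      · intro i _ hi x hx
        simp only [hi, dif_pos] at hx
        simpa [σ', hi] using hB _ x hx
      · rintro _ _ ⟨x, y, rfl, rfl, hxy⟩ _ _
        simp only [Fin.is_lt, dif_pos]
        rcases hxy with hxy | hxy
        · exact hB1 _ hxy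
        · rw [← hlen, ← hlen]
          exact hB2 _ hxy
    · rintro ⟨B, rfl, hB, hB'⟩
      have e : cat B 0 k = (List.ofFn (fun i : Fin k => B i)).flatten := by
        unfold cat
        congr 1
        rw [List.Ico.zero_bot]
        apply List.ext_getElem
        · simp
        · intro i h1 h2
          simp
      have e2 : ∀ i : Fin k, ∀ x ∈ B i, x ∈ σ i := by
        intro i x hx
        rw [← hσ' i]
        exact hB i (Nat.zero_le _) i.2 x hx
      exact ⟨⟨fun i => B i, e, e2, fun e he =>
        hB' _ _ ⟨e.1, e.2, rfl, rfl, Or.inl he⟩ (Nat.zero_le _) e.2.2⟩,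
        ⟨fun i => B i, e, e2, fun e he =>
        hB' _ _ ⟨e.1, e.2, rfl, rfl, Or.inr he⟩ (Nat.zero_le _) e.2.2⟩⟩
  rw [heq]
  have share : ∀ e₁ e₂ : Fin k × Fin k,
      (e₁ ≠ e₂ → ({e₁.1, e₁.2} : Set (Fin k)) ∩ {e₂.1, e₂.2} = ∅) →
      (e₁.1 = e₂.1 ∨ e₁.1 = e₂.2 ∨ e₁.2 = e₂.1 ∨ e₁.2 = e₂.2) → e₁ = e₂ := by
    intro e₁ e₂ h1 h2
    by_contra hne
    have h3 := Set.eq_empty_iff_forall_notMem.1 (h1 hne)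
    have h4 := h3 e₁.1
    have h5 := h3 e₁.2
    simp only [Set.mem_inter_iff, Set.mem_insert_iff, Set.mem_singleton_iff] at h4 h5
    tauto
  refine LI_cf σ' C k ?_ ?_ ?_ ?_
  · intro i
    by_cases hi : i < k
    · simpa [σ', hi] using hfin _
    · simp [σ', hi]
  · rintro _ _ ⟨x, y, rfl, rfl, hxy | hxy⟩
    · exact hC₁ _ hxy
    · exact hC₂ _ hxy
  · rintro _ _ _ _ ⟨x, y, rfl, rfl, hxy⟩ ⟨x', y', rfl, rfl, hxy'⟩ h1 h2 h3
    have hc : ArcsCross (x, y) (x', y') := Or.inl ⟨h1, h2, h3⟩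
    have hc' : ArcsCross (x', y') (x, y) := Or.inr ⟨h1, h2, h3⟩
    rcases hxy with hxy | hxy <;> rcases hxy' with hxy' | hxy'
    · exact hwn₁ _ hxy _ hxy' hc
    · exact hx _ hxy _ hxy' hc
    · exact hx _ hxy' _ hxy hc'
    · exact hwn₂ _ hxy _ hxy' hc
  · rintro _ _ _ _ ⟨x, y, rfl, rfl, hxy⟩ ⟨x', y', rfl, rfl, hxy'⟩ hor
    simp only [Fin.val_inj] at hor ⊢
    have key : (x, y) = (x', y') := by
      rcases hxy with hxy | hxy <;> rcases hxy' with hxy' | hxy'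
      · exact share _ _ (hm₁ _ hxy _ hxy') hor
      · exact share _ _ (hsh _ hxy _ hxy') hor
      · exact (share _ _ (hsh _ hxy' _ hxy) (by
          simp only [eq_comm (a := x'), eq_comm (a := y')]
          tauto)).symm
      · exact share _ _ (hm₂ _ hxy _ hxy') hor
    simpa using key

end CF
end BlockCF

/-- Characterization of block-counting CFL intersection: for well-nested matchings `C₁, C₂`,
the intersection of the block-counting languages is context-free iff `C₁, C₂` are jointly
well-nested. -/
theorem blockLang_inter_contextFree_iff {α : Type} {k : ℕ} (σ : Fin k → Set α)
    (hdisj : ∀ i j : Fin k, i ≠ j → Disjoint (σ i) (σ j))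
    (hfin : ∀ i : Fin k, (σ i).Finite) (hne : ∀ i : Fin k, (σ i).Nonempty)
    (C₁ C₂ : Set (Fin k × Fin k))
    (hC₁ : IsArcSet C₁) (hC₂ : IsArcSet C₂)
    (hwn₁ : WellNested C₁) (hwn₂ : WellNested C₂)
    (hm₁ : IsMatching C₁) (hm₂ : IsMatching C₂) :
    (blockLang σ C₁ ⊓ blockLang σ C₂).IsContextFree ↔ JointlyWellNested C₁ C₂ := by
  exact ⟨BlockCF.jointly_of_cf hdisj hne C₁ C₂ hC₁ hC₂ hwn₁ hwn₂,
    BlockCF.cf_of_jointly hdisj hfin C₁ C₂ hC₁ hC₂ hm₁ hm₂⟩
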